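/- Let p be a binary word with exactly 3 runs and of length l ≥ 4. If p is not trivially equivalent to 1101, then B_{n,p}(M_{n,p} − 1) = 0 for all n ≥ l + 2; in particular p has an internal zero at every n ≥ l + 2. If p is trivially equivalent to 1101, then p does not have an internal zero at n = 6 = l + 2, but B_{n,p}(M_{n,p} − 1) = 0 for all n ≥ 7. -/

import Mathlib

/-- `occ p w` is the number of occurrences of `p` as a subsequence of `w`,
i.e. the number of choices of indices `i₁ < ⋯ < i_l` in `w` matching `p`. -/
def occ (p w : List Bool) : ℕ := w.sublists.count p

/-- `B n p k` is the number of binary words of length `n` with exactly `k` occurrences of `p`. -/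
noncomputable def B (n : ℕ) (p : List Bool) (k : ℕ) : ℕ :=
  Nat.card {w : List Bool // w.length = n ∧ occ p w = k}

/-- The list of runs (maximal blocks of consecutive equal letters) of a binary word. -/
def runs (p : List Bool) : List (List Bool) := p.splitBy (· == ·)

/-- The number of runs of a binary word. -/
def numRuns (p : List Bool) : ℕ := (runs p).length

/-- The number of runs of size `i` of a binary word. -/
def numRunsOfSize (p : List Bool) (i : ℕ) : ℕ := ((runs p).map List.length).count i

/-- `maxOcc n p` is the maximum number of occurrences of `p` among binary words of length `n`. -/
noncomputable def maxOcc (n : ℕ) (p : List Bool) : ℕ :=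
  sSup {k | ∃ w : List Bool, w.length = n ∧ occ p w = k}

/-- `p` has an internal zero at `n` if the sequence `(B n p k)_{k ≥ 0}` has an internal zero. -/
def HasInternalZeroAt (p : List Bool) (n : ℕ) : Prop :=
  ∃ k₁ k₂ k₃ : ℕ, k₁ < k₂ ∧ k₂ < k₃ ∧ B n p k₁ ≠ 0 ∧ B n p k₂ = 0 ∧ B n p k₃ ≠ 0

/-- `p` and `q` are trivially equivalent: `q` is `p`, its reverse, its complement,
or its reversed complement. -/
def TrivEquiv (p q : List Bool) : Prop :=
  q = p ∨ q = p.reverse ∨ q = p.map (!·) ∨ q = (p.map (!·)).reverse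

/-!
A word `p` with three runs is `x^r y^s x^t`, where `y` is the complement of `x`. Once the positions
`S` of the middle run in `w` are fixed, the rest of `p` can be placed in `i.choose r * j.choose t`
ways, where `i` and `j` count the letters `x` before and after `S`. Each of these weights is at most
`g`, the largest product of this kind with `i + j` equal to the number of letters `x` in `w`.
So `c_p(w) ≤ m.choose s * g` with `m` the number of letters `y`, and the maximum `M` is the largest
product `i.choose r * m.choose s * j.choose t` with `i + m + j = n`.

For `n ≥ r + s + t + 2` such a product never equals `M - 1`: moving units from one index to another
and using log-concavity of binomial coefficients, one would find two products that differ by `1`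
and whose indices differ by moving one unit, which forces `n = r + s + t + 1`. Hence if
`c_p(w) = M - 1`, then `M = m.choose s * g` and a single placement `S` has weight `g - 1`, all
others having weight `g`. If `m = s`, then `M - 1` is again a product. If `s ≥ 2` and `m > s`,
exchanging the first or the last position of `S` for a new one yields another placement of weight
below `g`. If `s = 1`, the same analysis of adjacent products with two factors leaves only words
equivalent to `1101`, with `n = 6`.
-/

open scoped Finset

/-! ### Binomial coefficients -/

lemma succ_lt_choose {k a : ℕ} (hk : k ≠ 0) (ha : k + 1 < a) : k + 1 < a.choose k := by
  obtain ⟨k, rfl⟩ := Nat.exists_eq_succ_of_ne_zero hk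
  calc k + 1 + 1 < (k + 2).choose k + (k + 2).choose (k + 1) := by
        rw [Nat.choose_succ_self_right]
        have := Nat.choose_pos (show k ≤ k + 2 by lia)
        lia
    _ = (k + 3).choose (k + 1) := (Nat.choose_succ_succ' _ _).symm
    _ ≤ a.choose (k + 1) := Nat.choose_le_choose _ ha

lemma succ_le_choose {k a : ℕ} (ha : k < a) : k + 1 ≤ a.choose k :=
  calc k + 1 = (k + 1).choose k := (Nat.choose_succ_self_right k).symm
    _ ≤ a.choose k := Nat.choose_le_choose _ ha

lemma choose_mul_choose_succ_le {a b : ℕ} (r : ℕ) (hab : a ≤ b) :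
    a.choose r * (b + 1).choose r ≤ (a + 1).choose r * b.choose r := by
  rcases lt_or_ge a r with har | har
  · simp [Nat.choose_eq_zero_of_lt har]
  have hfactor : (a + 1 - r) * (b + 1) ≤ (a + 1) * (b + 1 - r) := by
    obtain ⟨a, rfl⟩ := Nat.exists_eq_add_of_le har
    obtain ⟨b, rfl⟩ := Nat.exists_eq_add_of_le hab
    rw [show r + a + 1 - r = a + 1 by lia, show r + a + b + 1 - r = a + b + 1 by lia]
    nlinarith
  refine Nat.le_of_mul_le_mul_right ?_ (show 0 < (a + 1) * (b + 1 - r) by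
    exact Nat.mul_pos (by lia) (by lia))
  calc a.choose r * (b + 1).choose r * ((a + 1) * (b + 1 - r))
      = a.choose r * (a + 1) * ((b + 1).choose r * (b + 1 - r)) := by ring
    _ = (a + 1).choose r * b.choose r * ((a + 1 - r) * (b + 1)) := by
        rw [Nat.choose_mul_succ_eq, ← Nat.choose_mul_succ_eq b]; ring
    _ ≤ (a + 1).choose r * b.choose r * ((a + 1) * (b + 1 - r)) :=
        Nat.mul_le_mul_left _ hfactor

/-- With `U = a.choose (r - 1)` and `V = b.choose (s - 1)`, the hypothesis reads
`U * V * (r * (b + 1) - s * (a + 1)) = r * s`, while `r ≤ U` and `s ≤ V`. -/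
lemma eq_of_choose_mul_choose_eq_add_one {r s a b : ℕ} (hr : 1 ≤ r) (hs : 1 ≤ s)
    (hra : r ≤ a) (hsb : s ≤ b)
    (h : (a + 1).choose r * b.choose s = a.choose r * (b + 1).choose s + 1) :
    a.choose (r - 1) = r ∧ b.choose (s - 1) = s ∧ r * (b + 1) = s * (a + 1) + 1 := by
  obtain ⟨r, rfl⟩ := Nat.exists_eq_add_of_le' hr
  obtain ⟨s, rfl⟩ := Nat.exists_eq_add_of_le' hs
  rw [Nat.choose_succ_succ', Nat.choose_succ_succ'] at h
  simp only [Nat.add_sub_cancel]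
  have hU : (r + 1 : ℤ) ≤ a.choose r := by exact_mod_cast succ_le_choose hra
  have hV : (s + 1 : ℤ) ≤ b.choose s := by exact_mod_cast succ_le_choose hsb
  have hX : (a.choose (r + 1) * (r + 1) : ℤ) = a.choose r * (a - r) := by
    rw [← Nat.cast_sub (by lia)]; exact_mod_cast Nat.choose_succ_right_eq a r
  have hY : (b.choose (s + 1) * (s + 1) : ℤ) = b.choose s * (b - s) := by
    rw [← Nat.cast_sub (by lia)]; exact_mod_cast Nat.choose_succ_right_eq b s
  zify at h ⊢
  set U : ℤ := (a.choose r : ℤ)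
  set V : ℤ := (b.choose s : ℤ)
  set δ : ℤ := (r + 1) * (b + 1) - (s + 1) * (a + 1)
  have hUVδ : U * V * δ = (r + 1) * (s + 1) := by
    linear_combination (r + 1) * (s + 1) * h - U * (r + 1) * hY + V * (s + 1) * hX
  have hUV : (r + 1 : ℤ) * (s + 1) ≤ U * V := by gcongr
  have hrs : (0 : ℤ) < (r + 1) * (s + 1) := by positivity
  have hδ_one : δ = 1 := by
    have hδ_pos : 0 < δ := (mul_pos_iff_of_pos_left (hrs.trans_le hUV)).mp (hUVδ ▸ hrs)
    have hδ_le : δ ≤ 1 := le_of_mul_le_mul_left (by lia) (hrs.trans_le hUV)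
    lia
  rw [hδ_one, mul_one] at hUVδ
  refine ⟨hU.antisymm' ?_, hV.antisymm' ?_, by lia⟩ <;> nlinarith

lemma cases_of_choose_mul_choose_eq_add_one {r s a b : ℕ} (hr : 1 ≤ r) (hs : 1 ≤ s)
    (hra : r ≤ a) (hsb : s ≤ b)
    (h : (a + 1).choose r * b.choose s = a.choose r * (b + 1).choose s + 1) :
    (a = r ∧ b = s ∧ r = s + 1) ∨ (r = 1 ∧ s = 1 ∧ b = a + 1) := by
  obtain ⟨hU, hV, hdiff⟩ := eq_of_choose_mul_choose_eq_add_one hr hs hra hsb h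
  have har : a = r ∨ r = 1 := by
    by_contra! hne
    have := succ_lt_choose (k := r - 1) (a := a) (by lia) (by lia)
    lia
  have hbs : b = s ∨ s = 1 := by
    by_contra! hne
    have := succ_lt_choose (k := s - 1) (a := b) (by lia) (by lia)
    lia
  rcases har with rfl | rfl <;> rcases hbs with rfl | rfl
  · exact Or.inl ⟨rfl, rfl, by lia⟩
  · have hab : a * b = 2 := by lia
    rcases (Nat.dvd_prime Nat.prime_two).mp (Dvd.intro b hab) with rfl | rfl <;> lia
  · nlinarith
  · lia

/-! ### Products of binomial coefficients on a simplex -/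

lemma exists_eq_add_single {ι : Type*} [DecidableEq ι] {a : ι → ℕ} {i : ι}
    (hi : 0 < a i) : ∃ c : ι → ℕ, a = c + Pi.single i 1 := by
  refine ⟨Function.update a i (a i - 1), funext fun k ↦ ?_⟩
  rcases eq_or_ne k i with rfl | hk
  · simp [Nat.sub_add_cancel hi]
  · simp [hk]

section ChooseProd

variable {ι : Type*} [Fintype ι]

/-- The product of the binomial coefficients `(a i).choose (r i)`. For `ι = Fin 3` it counts the
occurrences of a word with run lengths `r` in a word with the same first letter and run lengths
`a`. -/
def chooseProd (r a : ι → ℕ) : ℕ := ∏ i, (a i).choose (r i)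

lemma chooseProd_ne_zero_iff {r a : ι → ℕ} : chooseProd r a ≠ 0 ↔ ∀ i, r i ≤ a i := by
  simp [chooseProd, Finset.prod_ne_zero_iff, Nat.choose_eq_zero_iff]

lemma exists_isGreatest_chooseProd [Nonempty ι] (r : ι → ℕ) (n : ℕ) :
    ∃ M, IsGreatest (chooseProd r '' {a | ∑ i, a i = n}) M := by
  classical
  have hfin : {a : ι → ℕ | ∑ i, a i = n}.Finite := by
    refine (Set.finite_Iic fun _ ↦ n).subset fun a ha i ↦ ?_
    exact (Finset.single_le_sum (fun _ _ ↦ Nat.zero_le _) (Finset.mem_univ i)).trans ha.le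
  have hne : {a : ι → ℕ | ∑ i, a i = n}.Nonempty :=
    ⟨Pi.single (Classical.arbitrary ι) n, by simp⟩
  obtain ⟨a, ha, hmax⟩ := Set.exists_max_image _ (chooseProd r) hfin hne
  exact ⟨_, ⟨a, ha, rfl⟩, Set.forall_mem_image.mpr hmax⟩

section Exchange

variable [DecidableEq ι]

lemma chooseProd_add_single (r c : ι → ℕ) {i j : ι} (hij : i ≠ j) :
    chooseProd r (c + Pi.single i 1) = (c i + 1).choose (r i) * (c j).choose (r j) *
      ∏ k ∈ ({i, j} : Finset ι)ᶜ, (c k).choose (r k) := by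
  rw [chooseProd, ← Finset.prod_mul_prod_compl {i, j}, Finset.prod_pair hij]
  congr 1
  · simp [hij.symm]
  · refine Finset.prod_congr rfl fun k hk ↦ ?_
    have hki : k ≠ i := by rintro rfl; simp at hk
    simp [hki]

lemma chooseProd_add_single' (r c : ι → ℕ) {i j : ι} (hij : i ≠ j) :
    chooseProd r (c + Pi.single j 1) = (c i).choose (r i) * (c j + 1).choose (r j) *
      ∏ k ∈ ({i, j} : Finset ι)ᶜ, (c k).choose (r k) := by
  rw [chooseProd_add_single r c hij.symm, Finset.pair_comm, mul_comm ((c j + 1).choose _)]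

lemma chooseProd_exchange (r : ι → ℕ) {c c' : ι → ℕ} {i j : ι} (hij : i ≠ j)
    (hi : c i ≤ c' i) (hj : c' j ≤ c j) :
    chooseProd r (c + Pi.single j 1) * chooseProd r (c' + Pi.single i 1) ≤
      chooseProd r (c + Pi.single i 1) * chooseProd r (c' + Pi.single j 1) := by
  simp only [chooseProd_add_single r _ hij, chooseProd_add_single' r _ hij]
  set P := ∏ k ∈ ({i, j} : Finset ι)ᶜ, (c k).choose (r k)
  set P' := ∏ k ∈ ({i, j} : Finset ι)ᶜ, (c' k).choose (r k)
  calc _ = (c i).choose (r i) * (c' i + 1).choose (r i) *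
        ((c' j).choose (r j) * (c j + 1).choose (r j)) * (P * P') := by ring
    _ ≤ (c i + 1).choose (r i) * (c' i).choose (r i) *
        ((c' j + 1).choose (r j) * (c j).choose (r j)) * (P * P') := by
      gcongr ?_ * ?_ * _ <;> exact choose_mul_choose_succ_le _ ‹_›
    _ = _ := by ring

lemma sum_add_single (c : ι → ℕ) (i : ι) (x : ℕ) :
    ∑ k, (c + Pi.single i x : ι → ℕ) k = ∑ k, c k + x := by
  simp [Finset.sum_add_distrib]

lemma exists_exchange {a a' : ι → ℕ} (hsum : ∑ i, a i = ∑ i, a' i) (hne : a ≠ a') :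
    ∃ (c c' : ι → ℕ) (i j : ι), i ≠ j ∧ a = c + Pi.single j 1 ∧ a' = c' + Pi.single i 1 ∧
      c i ≤ c' i ∧ c' j ≤ c j := by
  obtain ⟨i, hi⟩ : ∃ i, a i < a' i := by
    by_contra! hle
    exact hne (funext fun k ↦ ((Finset.sum_eq_sum_iff_of_le fun k _ ↦ hle k).mp
      hsum.symm k (Finset.mem_univ k)).symm)
  obtain ⟨j, hj⟩ : ∃ j, a' j < a j := by
    by_contra! hle
    exact hne (funext fun k ↦ (Finset.sum_eq_sum_iff_of_le fun k _ ↦ hle k).mp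
      hsum k (Finset.mem_univ k))
  have hij : i ≠ j := by rintro rfl; lia
  obtain ⟨c, rfl⟩ := exists_eq_add_single (Nat.zero_lt_of_lt hj)
  obtain ⟨c', rfl⟩ := exists_eq_add_single (Nat.zero_lt_of_lt hi)
  simp only [Pi.add_apply, Pi.single_eq_same, Pi.single_eq_of_ne hij,
    Pi.single_eq_of_ne hij.symm] at hi hj
  exact ⟨c, c', i, j, hij, rfl, rfl, by lia, by lia⟩

/-- Walk from `a` towards `a'` one unit at a time: by the exchange inequality the value never
drops below `M - 1`. -/
lemma exists_adjacent_chooseProd {r a a' : ι → ℕ} {n M : ℕ}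
    (hM : ∀ b, ∑ i, b i = n → chooseProd r b ≤ M) (ha : ∑ i, a i = n) (ha' : ∑ i, a' i = n)
    (hra : chooseProd r a + 1 = M) (hra' : chooseProd r a' = M) :
    ∃ (c : ι → ℕ) (i j : ι), i ≠ j ∧ ∑ k, c k + 1 = n ∧
      chooseProd r (c + Pi.single j 1) + 1 = M ∧ chooseProd r (c + Pi.single i 1) = M := by
  induction hd : ∑ i, (a i - a' i) using Nat.strong_induction_on generalizing a with
  | _ d ih =>
  obtain ⟨c, c', i, j, hij, rfl, rfl, hi, hj⟩ :=
    exists_exchange (ha.trans ha'.symm) (by rintro rfl; lia)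
  rw [sum_add_single] at ha ha'
  have hexch := chooseProd_exchange r hij hi hj
  have hle := hM (c + Pi.single i 1) (by rw [sum_add_single, ha])
  have hle' := hM (c' + Pi.single j 1) (by rw [sum_add_single, ha'])
  have hge : M ≤ chooseProd r (c + Pi.single i 1) + 1 := by
    by_contra! hlt
    nlinarith
  rcases hle.eq_or_lt with heq | hlt
  · exact ⟨c, i, j, hij, ha, hra, heq⟩
  refine ih _ ?_ (a := c + Pi.single i 1) (by rw [sum_add_single, ha]) (by lia) rfl
  rw [← hd]
  refine Finset.sum_lt_sum (fun k _ ↦ ?_) ⟨j, Finset.mem_univ j, ?_⟩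
  · simp only [Pi.add_apply]
    rcases eq_or_ne k i with rfl | hki
    · simp [hij]; lia
    · simp [hki]; lia
  · simp [hij.symm]; lia

lemma choose_eq_one_of_adjacent {r c : ι → ℕ} {i j k : ι} (hij : i ≠ j) (hki : k ≠ i) (hkj : k ≠ j)
    (hadj : chooseProd r (c + Pi.single i 1) = chooseProd r (c + Pi.single j 1) + 1) :
    (c k).choose (r k) = 1 := by
  rw [chooseProd_add_single r c hij, chooseProd_add_single' r c hij] at hadj
  have hdvd : ∏ l ∈ ({i, j} : Finset ι)ᶜ, (c l).choose (r l) ∣ 1 :=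
    (Nat.dvd_add_right (Dvd.intro_left _ rfl)).mp (hadj ▸ Dvd.intro_left _ rfl)
  exact Finset.prod_eq_one_iff.mp (Nat.dvd_one.mp hdvd) k (by simp [hki, hkj])

/-- If `c + Pi.single i 1` attained the maximum, moving a unit from `j` to `k` would multiply the
value by `(r k + 1) * (c j - 1) / c j`, which exceeds `1`. -/
lemma not_adjacent_of_two_le {r c : ι → ℕ} {i j k : ι} {n M : ℕ}
    (hM : ∀ b, ∑ i, b i = n → chooseProd r b ≤ M) (hc : ∑ l, c l + 1 = n) (hkj : k ≠ j)
    (hij : i ≠ j) (hki : k ≠ i) (hck : c k = r k) (hrk : 2 ≤ r k) (hrj : r j = 1) (hcj : 2 ≤ c j)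
    (hpos : M ≠ 0) : chooseProd r (c + Pi.single i 1) ≠ M := by
  intro hci
  obtain ⟨d, rfl⟩ := exists_eq_add_single (Nat.zero_lt_of_lt hcj)
  have hcomm : d + Pi.single j 1 + Pi.single i 1 = d + Pi.single i 1 + Pi.single j 1 := by
    abel
  have hmove := hM (d + Pi.single i 1 + Pi.single k 1) (by simpa only [sum_add_single] using hc)
  rw [← hci, hcomm, chooseProd_add_single r _ hkj, chooseProd_add_single' r _ hkj] at hmove
  rw [hcomm, chooseProd_add_single' r _ hkj] at hci
  simp only [Pi.add_apply, Pi.single_eq_same, Pi.single_eq_of_ne hkj, Pi.single_eq_of_ne hki,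
    Pi.single_eq_of_ne hij.symm, add_zero] at hck hcj hmove hci
  rw [hck, hrj, Nat.choose_succ_self_right, Nat.choose_self, Nat.choose_one_right,
    Nat.choose_one_right] at hmove
  have hP := Nat.pos_of_ne_zero (right_ne_zero_of_mul (hci.trans_ne hpos))
  have := Nat.le_of_mul_le_mul_right hmove hP
  nlinarith

lemma chooseProd_add_two_le {r a : ι → ℕ} {k : ι} {x : ℕ} (hk : 2 ≤ r k) (hx : x ≠ 0)
    (ha : chooseProd r a ≠ 0) : chooseProd r a + 2 ≤ chooseProd r (a + Pi.single k x) := by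
  have hrest : ∏ i ∈ Finset.univ.erase k, ((a + Pi.single k x : ι → ℕ) i).choose (r i) =
      ∏ i ∈ Finset.univ.erase k, (a i).choose (r i) :=
    Finset.prod_congr rfl fun i hi ↦ by simp [Finset.ne_of_mem_erase hi]
  have hka : r k ≤ a k := chooseProd_ne_zero_iff.mp ha k
  have hgrow : (a k).choose (r k) + 2 ≤ (a k + x).choose (r k) := by
    obtain ⟨q, hq⟩ := Nat.exists_eq_add_of_le' (one_le_two.trans hk)
    have := succ_le_choose (k := q) (a := a k) (by lia)
    calc (a k).choose (r k) + 2 ≤ (a k + 1).choose (r k) := by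
          rw [hq, Nat.choose_succ_succ']; lia
      _ ≤ (a k + x).choose (r k) := Nat.choose_le_choose _ (by lia)
  unfold chooseProd at ha ⊢
  rw [← Finset.mul_prod_erase _ _ (Finset.mem_univ k)] at ha ⊢
  rw [← Finset.mul_prod_erase _ _ (Finset.mem_univ k), hrest, Pi.add_apply, Pi.single_eq_same]
  have := Nat.pos_of_ne_zero (right_ne_zero_of_mul ha)
  nlinarith

end Exchange

lemma eq_of_chooseProd_add_one_eq {r a : ι → ℕ} {n M : ℕ} (hr : ∀ i, 1 ≤ r i)
    (hr2 : ∃ i, 2 ≤ r i) (hM : IsGreatest (chooseProd r '' {a | ∑ i, a i = n}) M) (hM2 : 2 ≤ M)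
    (ha : ∑ i, a i = n) (hra : chooseProd r a + 1 = M) :
    n = ∑ i, r i + 1 ∧ ∃ i j, i ≠ j ∧ r i = r j + 1 ∧ M = r i + 1 := by
  classical
  obtain ⟨⟨a', ha', hra'⟩, hmax⟩ := hM
  replace hmax : ∀ b, ∑ i, b i = n → chooseProd r b ≤ M :=
    fun b hb ↦ hmax (Set.mem_image_of_mem _ hb)
  obtain ⟨c, i, j, hij, hc, hcj, hci⟩ := exists_adjacent_chooseProd hmax ha ha' hra hra'
  have hadj : chooseProd r (c + Pi.single i 1) = chooseProd r (c + Pi.single j 1) + 1 := by lia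
  have hother (k : ι) (hki : k ≠ i) (hkj : k ≠ j) : (c k).choose (r k) = 1 :=
    choose_eq_one_of_adjacent hij hki hkj hadj
  have hother' (k : ι) (hki : k ≠ i) (hkj : k ≠ j) : c k = r k :=
    (Nat.choose_eq_one_iff.mp (hother k hki hkj)).resolve_left (by have := hr k; lia)
  have hrest : ∏ k ∈ ({i, j} : Finset ι)ᶜ, (c k).choose (r k) = 1 :=
    Finset.prod_eq_one fun k hk ↦ by
      simp only [Finset.mem_compl, Finset.mem_insert, Finset.mem_singleton, not_or] at hk
      exact hother k hk.1 hk.2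
  have hri : r i ≤ c i := by
    simpa [hij] using chooseProd_ne_zero_iff.mp (show chooseProd r (c + Pi.single j 1) ≠ 0 by lia) i
  have hrj : r j ≤ c j := by
    simpa [hij.symm] using
      chooseProd_ne_zero_iff.mp (show chooseProd r (c + Pi.single i 1) ≠ 0 by lia) j
  rw [chooseProd_add_single r c hij, chooseProd_add_single' r c hij, hrest, mul_one, mul_one]
    at hadj
  rcases cases_of_choose_mul_choose_eq_add_one (hr i) (hr j) hri hrj hadj with
    ⟨hi, hj, hrij⟩ | ⟨hi, hj, hcij⟩
  · obtain rfl : c = r := funext fun k ↦ by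
      by_cases hki : k = i
      · rw [hki, hi]
      by_cases hkj : k = j
      · rw [hkj, hj]
      exact hother' k hki hkj
    refine ⟨hc.symm, i, j, hij, hrij, ?_⟩
    rw [← hci, chooseProd_add_single c c hij, hrest]
    simp
  · obtain ⟨k, hk⟩ := hr2
    have hki : k ≠ i := by rintro rfl; lia
    have hkj : k ≠ j := by rintro rfl; lia
    exact absurd hci (not_adjacent_of_two_le hmax hc hkj hij hki (hother' k hki hkj) hk hj
      (by lia) (by lia))

lemma two_le_of_isGreatest_chooseProd {r : ι → ℕ} {n M : ℕ} (hr2 : ∃ i, 2 ≤ r i)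
    (hn : ∑ i, r i < n) (hM : IsGreatest (chooseProd r '' {a | ∑ i, a i = n}) M) : 2 ≤ M := by
  classical
  obtain ⟨k, hk⟩ := hr2
  have hsum : ∑ l, (r + Pi.single k (n - ∑ i, r i) : ι → ℕ) l = n := by
    rw [sum_add_single]; lia
  have hgrow := chooseProd_add_two_le hk (Nat.sub_ne_zero_of_lt hn)
    (chooseProd_ne_zero_iff.mpr fun i ↦ le_refl (r i))
  have := hM.2 (Set.mem_image_of_mem _ hsum)
  lia

lemma chooseProd_add_one_ne {r a : ι → ℕ} {n M : ℕ} (hr : ∀ i, 1 ≤ r i) (hr2 : ∃ i, 2 ≤ r i)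
    (hn : ∑ i, r i + 2 ≤ n) (hM : IsGreatest (chooseProd r '' {a | ∑ i, a i = n}) M)
    (ha : ∑ i, a i ≤ n) : chooseProd r a + 1 ≠ M := by
  classical
  intro hra
  have hM2 := two_le_of_isGreatest_chooseProd hr2 (by lia) hM
  rcases ha.eq_or_lt with ha | ha
  · have := (eq_of_chooseProd_add_one_eq hr hr2 hM hM2 ha hra).1
    lia
  · obtain ⟨k, hk⟩ := hr2
    have hsum : ∑ l, (a + Pi.single k (n - ∑ i, a i) : ι → ℕ) l = n := by
      rw [sum_add_single]; lia
    have hgrow := chooseProd_add_two_le hk (Nat.sub_ne_zero_of_lt ha)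
      (show chooseProd r a ≠ 0 by lia)
    have := hM.2 (Set.mem_image_of_mem _ hsum)
    lia

end ChooseProd

/-! ### Occurrences -/

lemma occ_cons_nil (a : Bool) (p : List Bool) : occ (a :: p) [] = 0 := by
  simp [occ]

lemma occ_cons_cons (a b : Bool) (p w : List Bool) :
    occ (a :: p) (b :: w) = occ (a :: p) w + if b = a then occ p w else 0 := by
  unfold occ
  rw [(List.sublists_cons_perm_append b w).count_eq, List.count_append]
  congr 1
  split_ifs with h
  · rw [h, List.count_map_of_injective _ _ List.cons_injective]
  · exact List.count_eq_zero_of_not_mem (by simp [h])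

lemma occ_nil (w : List Bool) : occ [] w = 1 := by
  unfold occ
  induction w with
  | nil => simp
  | cons b w ih =>
    rw [(List.sublists_cons_perm_append b w).count_eq, List.count_append, ih,
      List.count_eq_zero_of_not_mem (by simp)]

lemma occ_replicate (t : ℕ) (x : Bool) (w : List Bool) :
    occ (List.replicate t x) w = (w.count x).choose t := by
  induction w generalizing t with
  | nil => cases t <;> simp [List.replicate_succ, occ_nil, occ_cons_nil]
  | cons b w ih =>
    cases t with
    | zero => simp [occ_nil]
    | succ t =>
      rw [List.replicate_succ, occ_cons_cons, ← List.replicate_succ, ih, ih, List.count_cons]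
      by_cases h : b = x
      · simp only [h, if_true, BEq.rfl, Nat.choose_succ_succ', add_comm]
      · simp [h]

lemma occ_mul_occ_le_occ_append (p₁ p₂ w₁ w₂ : List Bool) :
    occ p₁ w₁ * occ p₂ w₂ ≤ occ (p₁ ++ p₂) (w₁ ++ w₂) := by
  induction w₁ generalizing p₁ with
  | nil =>
    cases p₁ with
    | nil => simp [occ_nil]
    | cons a p₁ => simp [occ_cons_nil]
  | cons b w₁ ih =>
    cases p₁ with
    | nil =>
      have hmono : occ p₂ (w₁ ++ w₂) ≤ occ p₂ (b :: (w₁ ++ w₂)) := by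
        cases p₂ with
        | nil => simp [occ_nil]
        | cons a p₂ => exact occ_cons_cons a b p₂ _ ▸ Nat.le_add_right _ _
      simpa [occ_nil] using (ih []).trans hmono
    | cons a p₁ =>
      have htail := ih (a :: p₁)
      have hhead := ih p₁
      simp only [List.cons_append, occ_cons_cons, add_mul] at htail ⊢
      split_ifs <;> lia

lemma occ_reverse (p w : List Bool) : occ p.reverse w.reverse = occ p w := by
  unfold occ
  rw [List.sublists_reverse, List.count_map_of_injective _ _ List.reverse_injective,
    (List.sublists_perm_sublists' w).count_eq]

lemma occ_map_not (p w : List Bool) : occ (p.map (!·)) (w.map (!·)) = occ p w := by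
  unfold occ
  rw [List.sublists_map,
    List.count_map_of_injective _ _ (List.map_injective_iff.mpr Bool.not_injective)]

/-! ### Placements of the middle run -/

/-- The word `x^r (!x)^s x^t`; for positive `r`, `s`, `t` this is the general word with three
runs. -/
def threeWord (x : Bool) (r s t : ℕ) : List Bool :=
  List.replicate r x ++ (List.replicate s (!x) ++ List.replicate t x)

lemma length_threeWord (x : Bool) (r s t : ℕ) : (threeWord x r s t).length = r + s + t := by
  simp [threeWord, add_assoc]

/-- The set of (zero-based) positions of the letter `x` in `w`. -/
def positions (x : Bool) (w : List Bool) : Finset ℕ :=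
  {i ∈ Finset.range w.length | w[i]? = some x}

/-- The translate of a set of positions, after a letter has been put in front of the word. -/
abbrev shift (S : Finset ℕ) : Finset ℕ := S.map (addRightEmbedding 1)

/-- The number of letters `x` of `w` preceding all positions in `S`; all of them if `S` is
empty. -/
def numBefore (x : Bool) (w : List Bool) (S : Finset ℕ) : ℕ :=
  #{i ∈ positions x w | ∀ j ∈ S, i < j}

/-- The number of letters `x` of `w` following all positions in `S`; all of them if `S` is
empty. -/
def numAfter (x : Bool) (w : List Bool) (S : Finset ℕ) : ℕ :=
  #{i ∈ positions x w | ∀ j ∈ S, j < i}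

/-- The number of occurrences of `x^r (!x)^s x^t` in `w` whose middle run is at the positions
in `S`. -/
def weight (x : Bool) (r t : ℕ) (w : List Bool) (S : Finset ℕ) : ℕ :=
  (numBefore x w S).choose r * (numAfter x w S).choose t

lemma mem_positions {x : Bool} {w : List Bool} {i : ℕ} : i ∈ positions x w ↔ w[i]? = some x := by
  simp only [positions, Finset.mem_filter, Finset.mem_range, and_iff_right_iff_imp]
  exact fun h ↦ (List.getElem?_eq_some_iff.mp h).1

lemma positions_cons_self (x : Bool) (w : List Bool) :
    positions x (x :: w) = insert 0 (shift (positions x w)) := by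
  ext i
  cases i <;> simp [mem_positions]

lemma positions_cons_of_ne {x b : Bool} (h : b ≠ x) (w : List Bool) :
    positions x (b :: w) = shift (positions x w) := by
  ext i
  cases i <;> simp [mem_positions, h]

lemma card_positions (x : Bool) (w : List Bool) : #(positions x w) = w.count x := by
  induction w with
  | nil => rfl
  | cons b w ih =>
    by_cases h : b = x
    · rw [h, positions_cons_self, Finset.card_insert_of_notMem (by simp), Finset.card_map, ih,
        List.count_cons_self]
    · rw [positions_cons_of_ne h, Finset.card_map, ih, List.count_cons_of_ne h]

lemma numBefore_cons_self_shift (x : Bool) (w : List Bool) (S : Finset ℕ) :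
    numBefore x (x :: w) (shift S) = numBefore x w S + 1 := by
  rw [numBefore, positions_cons_self, Finset.filter_insert, if_pos (by simp), Finset.filter_map,
    Finset.card_insert_of_notMem (by simp), Finset.card_map]
  simp [numBefore]

lemma numBefore_cons_shift_of_ne {x b : Bool} (h : b ≠ x) (w : List Bool) (S : Finset ℕ) :
    numBefore x (b :: w) (shift S) = numBefore x w S := by
  rw [numBefore, positions_cons_of_ne h, Finset.filter_map, Finset.card_map]
  simp [numBefore]

lemma numBefore_insert_zero (x : Bool) (w : List Bool) (S : Finset ℕ) :
    numBefore x w (insert 0 S) = 0 := by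
  simp [numBefore]

lemma numAfter_empty (x : Bool) (w : List Bool) : numAfter x w ∅ = w.count x := by
  simp [numAfter, card_positions]

lemma numAfter_cons_shift (x b : Bool) (w : List Bool) {S : Finset ℕ} (hS : S.Nonempty) :
    numAfter x (b :: w) (shift S) = numAfter x w S := by
  have hfilter : #{i ∈ shift (positions x w) | ∀ j ∈ shift S, j < i} = numAfter x w S := by
    rw [Finset.filter_map, Finset.card_map]
    simp [numAfter]
  rw [numAfter]
  by_cases h : b = x
  · rw [h, positions_cons_self, Finset.filter_insert,
      if_neg (by simpa [Finset.Nonempty] using hS), hfilter]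
  · rw [positions_cons_of_ne h, hfilter]

lemma numAfter_cons_insert_zero {x b : Bool} (h : b ≠ x) (w : List Bool) (S : Finset ℕ) :
    numAfter x (b :: w) (insert 0 (shift S)) = numAfter x w S := by
  rw [numAfter, positions_cons_of_ne h, Finset.filter_map, Finset.card_map]
  simp [numAfter]

lemma sum_powersetCard_succ_insert {α M : Type*} [DecidableEq α] [AddCommMonoid M] {x : α}
    {Y : Finset α} (hx : x ∉ Y) (s : ℕ) (f : Finset α → M) :
    ∑ S ∈ (insert x Y).powersetCard (s + 1), f S =
      ∑ S ∈ Y.powersetCard (s + 1), f S + ∑ S ∈ Y.powersetCard s, f (insert x S) := by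
  have hnotMem {k : ℕ} {S : Finset α} (hS : S ∈ Y.powersetCard k) : x ∉ S :=
    fun h ↦ hx ((Finset.mem_powersetCard.mp hS).1 h)
  have hinj : Set.InjOn (insert x) (Y.powersetCard s : Set (Finset α)) := fun S hS T hT hST ↦ by
    rw [← Finset.erase_insert (hnotMem hS), hST, Finset.erase_insert (hnotMem hT)]
  rw [Finset.powersetCard_succ_insert hx, Finset.sum_union, Finset.sum_image hinj]
  refine Finset.disjoint_left.mpr fun S hS hS' ↦ hnotMem hS ?_
  obtain ⟨T, -, rfl⟩ := Finset.mem_image.mp hS'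
  exact Finset.mem_insert_self x T

lemma sum_powersetCard_shift {M : Type*} [AddCommMonoid M] (Y : Finset ℕ) (s : ℕ)
    (f : Finset ℕ → M) :
    ∑ S ∈ (shift Y).powersetCard s, f S = ∑ S ∈ Y.powersetCard s, f (shift S) := by
  rw [Finset.powersetCard_map, Finset.sum_map]
  rfl

lemma nonempty_of_mem_powersetCard_succ {α : Type*} {Y S : Finset α} {s : ℕ}
    (hS : S ∈ Y.powersetCard (s + 1)) : S.Nonempty :=
  Finset.card_pos.mp (by rw [(Finset.mem_powersetCard.mp hS).2]; exact s.succ_pos)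

lemma powersetCard_succ_positions_nil (x : Bool) (s : ℕ) :
    (positions x []).powersetCard (s + 1) = ∅ :=
  Finset.powersetCard_eq_empty.mpr s.succ_pos

lemma occ_replicate_append_replicate (x : Bool) (s t : ℕ) (w : List Bool) :
    occ (List.replicate s (!x) ++ List.replicate t x) w =
      ∑ S ∈ (positions (!x) w).powersetCard s, (numAfter x w S).choose t := by
  induction w generalizing s with
  | nil =>
    cases s with
    | zero => simp [occ_replicate, numAfter_empty]
    | succ s => simp [List.replicate_succ, occ_cons_nil, powersetCard_succ_positions_nil]
  | cons b w ih =>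
    cases s with
    | zero => simp [occ_replicate, numAfter_empty]
    | succ s =>
      have hshift : ∑ S ∈ (positions (!x) w).powersetCard (s + 1),
            (numAfter x (b :: w) (shift S)).choose t =
          ∑ S ∈ (positions (!x) w).powersetCard (s + 1), (numAfter x w S).choose t :=
        Finset.sum_congr rfl fun S hS ↦ by
          rw [numAfter_cons_shift x b w (nonempty_of_mem_powersetCard_succ hS)]
      rw [List.replicate_succ, List.cons_append, occ_cons_cons, ← List.cons_append,
        ← List.replicate_succ, ih, ih]
      rcases Bool.eq_or_eq_not b x with rfl | rfl
      · rw [if_neg (Bool.self_ne_not b), add_zero, positions_cons_of_ne (Bool.self_ne_not b),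
          sum_powersetCard_shift, hshift]
      · rw [if_pos rfl, positions_cons_self, sum_powersetCard_succ_insert (by simp),
          sum_powersetCard_shift, sum_powersetCard_shift, hshift]
        simp only [numAfter_cons_insert_zero (Bool.not_ne_self x)]

lemma occ_threeWord (x : Bool) (r s t : ℕ) (w : List Bool) :
    occ (threeWord x r (s + 1) t) w = ∑ S ∈ (positions (!x) w).powersetCard (s + 1),
      weight x r t w S := by
  induction w generalizing r with
  | nil =>
    cases r <;>
      simp [threeWord, List.replicate_succ, occ_cons_nil, powersetCard_succ_positions_nil]
  | cons b w ih =>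
    cases r with
    | zero => simp [threeWord, weight, occ_replicate_append_replicate]
    | succ r =>
      have hcons : threeWord x (r + 1) (s + 1) t = x :: threeWord x r (s + 1) t := rfl
      rw [hcons, occ_cons_cons, ← hcons, ih, ih]
      rcases Bool.eq_or_eq_not b x with rfl | rfl
      · rw [if_pos rfl, positions_cons_of_ne (Bool.self_ne_not b), sum_powersetCard_shift,
          ← Finset.sum_add_distrib]
        refine Finset.sum_congr rfl fun S hS ↦ ?_
        unfold weight
        rw [numBefore_cons_self_shift, Nat.choose_succ_succ',
          numAfter_cons_shift b b w (nonempty_of_mem_powersetCard_succ hS)]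
        ring
      · rw [if_neg (Bool.not_ne_self x), add_zero, positions_cons_self,
          sum_powersetCard_succ_insert (by simp), sum_powersetCard_shift, sum_powersetCard_shift]
        simp only [weight, numBefore_insert_zero, Nat.choose_zero_succ, zero_mul,
          Finset.sum_const_zero, add_zero]
        refine Finset.sum_congr rfl fun S hS ↦ ?_
        rw [numBefore_cons_shift_of_ne (Bool.not_ne_self x),
          numAfter_cons_shift _ _ _ (nonempty_of_mem_powersetCard_succ hS)]

lemma numBefore_le_numBefore {x : Bool} {w : List Bool} {S S' : Finset ℕ}
    (h : ∀ j ∈ S', ∃ i ∈ S, i ≤ j) : numBefore x w S ≤ numBefore x w S' :=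
  Finset.card_le_card <| Finset.monotone_filter_right _ fun _ _ hS j hj ↦
    have ⟨i, hi, hij⟩ := h j hj
    (hS i hi).trans_le hij

lemma numAfter_le_numAfter {x : Bool} {w : List Bool} {S S' : Finset ℕ}
    (h : ∀ j ∈ S', ∃ i ∈ S, j ≤ i) : numAfter x w S ≤ numAfter x w S' :=
  Finset.card_le_card <| Finset.monotone_filter_right _ fun _ _ hS j hj ↦
    have ⟨i, hi, hij⟩ := h j hj
    hij.trans_lt (hS i hi)

lemma numBefore_add_numAfter_le {x : Bool} {w : List Bool} {S S' : Finset ℕ} {j : ℕ}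
    (hS : j ∈ S) (hS' : j ∈ S') : numBefore x w S + numAfter x w S' ≤ w.count x := by
  have hdisj : Disjoint {i ∈ positions x w | ∀ k ∈ S, i < k}
      {i ∈ positions x w | ∀ k ∈ S', k < i} :=
    Finset.disjoint_filter.mpr fun i _ hi hi' ↦ (hi j hS).asymm (hi' j hS')
  rw [numBefore, numAfter, ← Finset.card_union_of_disjoint hdisj, ← card_positions]
  exact Finset.card_le_card (Finset.union_subset (Finset.filter_subset _ _)
    (Finset.filter_subset _ _))

lemma numBefore_singleton_add_numAfter_singleton {x : Bool} {w : List Bool} {j : ℕ}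
    (hj : j ∈ positions (!x) w) : numBefore x w {j} + numAfter x w {j} = w.count x := by
  rw [← card_positions, ← Finset.card_filter_add_card_filter_not (· < j), numBefore, numAfter]
  congr 2
  · simp
  · refine Finset.filter_congr fun i hi ↦ ?_
    have hij : i ≠ j := by
      rintro rfl
      rw [mem_positions] at hi hj
      simp_all
    simp; lia

/-- Replacing the first, or the last, position of `S` by a new one gives placements whose weights
multiply to at most `g * weight S`. -/
lemma exists_ne_weight_lt {x : Bool} {r t s g : ℕ} {w : List Bool} {Y S : Finset ℕ}
    (hg : ∀ i j, i + j ≤ w.count x → i.choose r * j.choose t ≤ g) (hs : 2 ≤ s) (hY : s < #Y)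
    (hS : S ∈ Y.powersetCard s) (hlt : weight x r t w S < g) :
    ∃ S' ∈ Y.powersetCard s, S' ≠ S ∧ weight x r t w S' < g := by
  obtain ⟨hSY, hScard⟩ := Finset.mem_powersetCard.mp hS
  obtain ⟨y, hyY, hyS⟩ := Finset.exists_mem_notMem_of_card_lt_card (hScard.trans_lt hY)
  have hne : S.Nonempty := Finset.card_pos.mp (by lia)
  have hmin := S.min'_mem hne
  have hmax := S.max'_mem hne
  have hmin_ne_max : S.min' hne ≠ S.max' hne := (S.min'_lt_max'_of_card (by lia)).ne
  have hmem (k : ℕ) (hk : k ∈ S) : insert y (S.erase k) ∈ Y.powersetCard s := by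
    refine Finset.mem_powersetCard.mpr
      ⟨Finset.insert_subset hyY ((S.erase_subset k).trans hSY), ?_⟩
    rw [Finset.card_insert_of_notMem (fun h ↦ hyS (Finset.mem_of_mem_erase h)),
      Finset.card_erase_add_one hk, hScard]
  have hneS (k : ℕ) : insert y (S.erase k) ≠ S := fun h ↦ hyS (h ▸ Finset.mem_insert_self _ _)
  by_contra! hge
  have hge₁ := hge _ (hmem _ hmin) (hneS _)
  have hge₂ := hge _ (hmem _ hmax) (hneS _)
  set S₁ := insert y (S.erase (S.min' hne))
  set S₂ := insert y (S.erase (S.max' hne))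
  have hafter : numAfter x w S₁ ≤ numAfter x w S := numAfter_le_numAfter fun j hj ↦
    ⟨S.max' hne, by simp [S₁, hmax, hmin_ne_max.symm], S.le_max' j hj⟩
  have hbefore : numBefore x w S₂ ≤ numBefore x w S := numBefore_le_numBefore fun j hj ↦
    ⟨S.min' hne, by simp [S₂, hmin, hmin_ne_max], S.min'_le j hj⟩
  have houter : (numBefore x w S₁).choose r * (numAfter x w S₂).choose t ≤ g :=
    hg _ _ (numBefore_add_numAfter_le (Finset.mem_insert_self y _) (Finset.mem_insert_self y _))
  refine lt_irrefl (g * g) ?_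
  calc g * g ≤ weight x r t w S₁ * weight x r t w S₂ := Nat.mul_le_mul hge₁ hge₂
    _ = (numBefore x w S₁).choose r * (numAfter x w S₂).choose t *
        ((numBefore x w S₂).choose r * (numAfter x w S₁).choose t) := by unfold weight; ring
    _ ≤ g * weight x r t w S := by unfold weight; gcongr
    _ < g * g := by gcongr; lia

/-! ### The maximal number of occurrences -/

lemma bddAbove_setOf_occ (n : ℕ) (p : List Bool) :
    BddAbove {k | ∃ w : List Bool, w.length = n ∧ occ p w = k} :=
  ((List.finite_length_eq Bool n).image (occ p)).bddAbove

lemma occ_le_maxOcc (p w : List Bool) : occ p w ≤ maxOcc w.length p :=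
  le_csSup (bddAbove_setOf_occ _ p) ⟨w, rfl, rfl⟩

lemma exists_occ_eq_maxOcc (n : ℕ) (p : List Bool) :
    ∃ w : List Bool, w.length = n ∧ occ p w = maxOcc n p :=
  Nat.sSup_mem (s := {k | ∃ w : List Bool, w.length = n ∧ occ p w = k})
    ⟨_, List.replicate n true, List.length_replicate, rfl⟩ (bddAbove_setOf_occ n p)

lemma chooseProd_two (r t i j : ℕ) :
    chooseProd ![r, t] ![i, j] = i.choose r * j.choose t := by
  simp [chooseProd]

lemma chooseProd_three (r s t i m j : ℕ) :
    chooseProd ![r, s, t] ![i, m, j] = m.choose s * (i.choose r * j.choose t) := by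
  simp [chooseProd, Fin.prod_univ_three]
  ring

lemma count_add_count_not (x : Bool) (w : List Bool) :
    w.count x + w.count (!x) = w.length := by
  cases x <;> simp [List.count_true_add_count_false, List.count_false_add_count_true]

lemma choose_mul_choose_le_of_isGreatest {r t N g i j : ℕ}
    (hg : IsGreatest (chooseProd ![r, t] '' {a | ∑ k, a k = N}) g) (hij : i + j ≤ N) :
    i.choose r * j.choose t ≤ g :=
  calc i.choose r * j.choose t ≤ (N - j).choose r * j.choose t := by gcongr; lia
    _ = chooseProd ![r, t] ![N - j, j] := (chooseProd_two ..).symm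
    _ ≤ g := hg.2 (Set.mem_image_of_mem _ (by simp; lia))

lemma weight_le {x : Bool} {r s t g : ℕ} {w : List Bool} {Y S : Finset ℕ}
    (hg : ∀ i j, i + j ≤ w.count x → i.choose r * j.choose t ≤ g)
    (hS : S ∈ Y.powersetCard (s + 1)) : weight x r t w S ≤ g :=
  have ⟨_, hj⟩ := nonempty_of_mem_powersetCard_succ hS
  hg _ _ (numBefore_add_numAfter_le hj hj)

lemma occ_threeWord_le {x : Bool} {r s t g : ℕ} {w : List Bool}
    (hg : ∀ i j, i + j ≤ w.count x → i.choose r * j.choose t ≤ g) :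
    occ (threeWord x r (s + 1) t) w ≤ (w.count (!x)).choose (s + 1) * g := by
  rw [occ_threeWord, ← card_positions, ← Finset.card_powersetCard, ← smul_eq_mul]
  exact Finset.sum_le_card_nsmul _ _ _ fun S hS ↦ weight_le hg hS

lemma choose_mul_choose_mul_choose_le_occ (x : Bool) (r s t a b c : ℕ) :
    b.choose s * (a.choose r * c.choose t) ≤ occ (threeWord x r s t) (threeWord x a b c) := by
  have h (k m : ℕ) (y : Bool) : m.choose k = occ (List.replicate k y) (List.replicate m y) := by
    rw [occ_replicate, List.count_replicate_self]
  calc b.choose s * (a.choose r * c.choose t)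
      = a.choose r * (b.choose s * c.choose t) := by ring
    _ ≤ occ (List.replicate r x) (List.replicate a x) *
        occ (List.replicate s (!x) ++ List.replicate t x)
          (List.replicate b (!x) ++ List.replicate c x) := by
      rw [h r a x, h s b (!x), h t c x]
      gcongr
      exact occ_mul_occ_le_occ_append ..
    _ ≤ _ := occ_mul_occ_le_occ_append ..

lemma chooseProd_le_maxOcc (x : Bool) (r s t : ℕ) {n i m j : ℕ} (hn : i + m + j = n) :
    chooseProd ![r, s, t] ![i, m, j] ≤ maxOcc n (threeWord x r s t) := by
  have hlen : (threeWord x i m j).length = n := by rw [length_threeWord, hn]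
  rw [chooseProd_three, ← hlen]
  exact (choose_mul_choose_mul_choose_le_occ ..).trans (occ_le_maxOcc _ _)

lemma exists_chooseProd_eq (x : Bool) (r s t : ℕ) (w : List Bool) {g : ℕ}
    (hg : IsGreatest (chooseProd ![r, t] '' {a | ∑ k, a k = w.count x}) g) :
    ∃ i j, i + w.count (!x) + j = w.length ∧
      chooseProd ![r, s, t] ![i, w.count (!x), j] = (w.count (!x)).choose s * g := by
  obtain ⟨a, ha, rfl⟩ := hg.1
  refine ⟨a 0, a 1, ?_, ?_⟩
  · have := count_add_count_not x w
    have : a 0 + a 1 = w.count x := by simpa using ha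
    lia
  · simp [chooseProd, Fin.prod_univ_three]
    ring

lemma isGreatest_maxOcc_threeWord (x : Bool) (r s t n : ℕ) :
    IsGreatest (chooseProd ![r, s + 1, t] '' {a | ∑ k, a k = n})
      (maxOcc n (threeWord x r (s + 1) t)) := by
  have hle {a : Fin 3 → ℕ} (ha : ∑ k, a k = n) :
      chooseProd ![r, s + 1, t] a ≤ maxOcc n (threeWord x r (s + 1) t) := by
    rw [Fin.sum_univ_three] at ha
    rw [show a = ![a 0, a 1, a 2] by ext i; fin_cases i <;> rfl]
    exact chooseProd_le_maxOcc x r (s + 1) t ha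
  refine ⟨?_, Set.forall_mem_image.mpr fun a ha ↦ hle ha⟩
  obtain ⟨w, rfl, hw⟩ := exists_occ_eq_maxOcc n (threeWord x r (s + 1) t)
  obtain ⟨g, hg⟩ := exists_isGreatest_chooseProd ![r, t] (w.count x)
  obtain ⟨i, j, hij, hprod⟩ := exists_chooseProd_eq x r (s + 1) t w hg
  have hsum : ∑ k, ![i, w.count (!x), j] k = w.length := by simpa [Fin.sum_univ_three] using hij
  refine ⟨_, hsum, (hle hsum).antisymm ?_⟩
  rw [hprod, ← hw]
  exact occ_threeWord_le fun i j ↦ choose_mul_choose_le_of_isGreatest hg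

/-! ### The value below the maximum -/

lemma exists_unique_deficit {α : Type*} {A : Finset α} {f : α → ℕ} {g : ℕ} (hf : ∀ S ∈ A, f S ≤ g)
    (hsum : ∑ S ∈ A, f S + 1 = #A * g) :
    ∃ S ∈ A, f S + 1 = g ∧ ∀ T ∈ A, T ≠ S → f T = g := by
  classical
  rw [← smul_eq_mul, ← Finset.sum_const] at hsum
  obtain ⟨S, hS, hlt⟩ := Finset.exists_lt_of_sum_lt (Nat.lt_of_succ_le hsum.le)
  rw [← Finset.add_sum_erase _ _ hS, ← Finset.add_sum_erase _ (fun _ ↦ g) hS] at hsum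
  have hle : ∑ T ∈ A.erase S, f T ≤ ∑ _T ∈ A.erase S, g :=
    Finset.sum_le_sum fun _ hT ↦ hf _ (Finset.mem_of_mem_erase hT)
  have heq := (Finset.sum_eq_sum_iff_of_le fun _ hT ↦ hf _ (Finset.mem_of_mem_erase hT)).mp
    (show ∑ T ∈ A.erase S, f T = ∑ _T ∈ A.erase S, g by lia)
  exact ⟨S, hS, by lia, fun T hT hne ↦ heq T (Finset.mem_erase.mpr ⟨hne, hT⟩)⟩

lemma exists_two_le_triple {r s t : ℕ} (hl : 4 ≤ r + s + t) : ∃ k, 2 ≤ ![r, s, t] k := by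
  simp only [Fin.exists_fin_succ, Matrix.cons_val_zero, Matrix.cons_val_succ]
  lia

lemma exists_two_le_pair {r t : ℕ} (hrt : 3 ≤ r + t) : ∃ k, 2 ≤ ![r, t] k := by
  simp only [Fin.exists_fin_two, Matrix.cons_val_zero, Matrix.cons_val_one]
  lia

lemma two_le_of_isGreatest_mul {r t m N g : ℕ} (hrt : 3 ≤ r + t) (hg0 : g ≠ 0)
    (hg : IsGreatest (chooseProd ![r, t] '' {a | ∑ k, a k = N}) g)
    (hM : IsGreatest (chooseProd ![r, 1, t] '' {a | ∑ k, a k = N + (m + 2)}) ((m + 2) * g)) :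
    2 ≤ g := by
  obtain ⟨k, hk⟩ := exists_two_le_triple (show 4 ≤ r + 1 + t by lia)
  obtain ⟨⟨a, ha, rfl⟩, -⟩ := hg
  have hprod : chooseProd ![r, 1, t] ![a 0, m + 1, a 1] = (m + 1) * chooseProd ![r, t] a := by
    rw [chooseProd_three, Nat.choose_one_right]
    simp [chooseProd]
  have hsum : ∑ l, (![a 0, m + 1, a 1] + Pi.single k 1 : Fin 3 → ℕ) l = N + (m + 2) := by
    have : a 0 + a 1 = N := by simpa using ha
    rw [sum_add_single, Fin.sum_univ_three]
    simp only [Matrix.cons_val]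
    lia
  have hgrow := chooseProd_add_two_le hk one_ne_zero
    (hprod.trans_ne (Nat.mul_ne_zero m.succ_ne_zero hg0))
  have hle := hM.2 (Set.mem_image_of_mem _ hsum)
  rw [hprod] at hgrow
  linarith

/-- The two-factor product attains both `g - 1` and its maximum `g`, which fixes `N` and `g`;
comparing `(m + 2) * g` with the three-factor product at `r + 1`, `m + 1`, `t + 1` leaves one case.
-/
lemma eq_of_choose_mul_choose_add_one_eq {r t m N g i j : ℕ} (hr : 1 ≤ r) (ht : 1 ≤ t)
    (hrt : 3 ≤ r + t) (hg : IsGreatest (chooseProd ![r, t] '' {a | ∑ k, a k = N}) g)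
    (hM : IsGreatest (chooseProd ![r, 1, t] '' {a | ∑ k, a k = N + (m + 2)}) ((m + 2) * g))
    (hij : i + j = N) (h : i.choose r * j.choose t + 1 = g) : r + t = 3 ∧ N + (m + 2) = 6 := by
  have hg2 : 2 ≤ g := two_le_of_isGreatest_mul hrt (by lia) hg hM
  obtain ⟨hN, k, l, hkl, hrt', hg'⟩ := eq_of_chooseProd_add_one_eq
    (by simp [Fin.forall_fin_two, hr, ht]) (exists_two_le_pair hrt) hg hg2 (a := ![i, j])
    (by simpa using hij) (by rwa [chooseProd_two])
  replace hN : N = r + t + 1 := by simpa using hN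
  have hsum : ∑ k, ![r + 1, m + 1, t + 1] k = N + (m + 2) := by
    simp only [Fin.sum_univ_three, Matrix.cons_val]
    lia
  have hcompare := hM.2 (Set.mem_image_of_mem _ hsum)
  rw [chooseProd_three, Nat.choose_one_right, Nat.choose_succ_self_right,
    Nat.choose_succ_self_right] at hcompare
  have hsmall {q : ℕ} (hq : 1 ≤ q) (h : (m + 1) * ((q + 2) * (q + 1)) ≤ (m + 2) * (q + 2)) :
      q = 1 ∧ m = 0 := by
    have : (m + 1) * (q + 1) ≤ m + 2 := by nlinarith
    constructor <;> nlinarith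
  have hsplit : (r = t + 1 ∧ g = r + 1) ∨ (t = r + 1 ∧ g = t + 1) := by
    fin_cases k <;> fin_cases l
    · exact absurd rfl hkl
    · exact Or.inl ⟨hrt', hg'⟩
    · exact Or.inr ⟨hrt', hg'⟩
    · exact absurd rfl hkl
  rcases hsplit with ⟨rfl, rfl⟩ | ⟨rfl, rfl⟩
  · obtain ⟨rfl, rfl⟩ := hsmall ht hcompare
    lia
  · obtain ⟨rfl, rfl⟩ := hsmall hr (by linarith)
    lia

lemma chooseProd_three_add_one_ne {r s t n M i m j : ℕ} (hr : 1 ≤ r) (hs : 1 ≤ s) (ht : 1 ≤ t)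
    (hl : 4 ≤ r + s + t) (hn : r + s + t + 2 ≤ n)
    (hM : IsGreatest (chooseProd ![r, s, t] '' {a | ∑ k, a k = n}) M) (h : i + m + j ≤ n) :
    chooseProd ![r, s, t] ![i, m, j] + 1 ≠ M := by
  refine chooseProd_add_one_ne ?_ (exists_two_le_triple hl) ?_ hM ?_
  · simp [Fin.forall_fin_succ, hr, hs, ht]
  · simpa [Fin.sum_univ_three] using hn
  · simpa [Fin.sum_univ_three] using h

/-- The middle run can be placed in `(w.count (!x)).choose (s + 1)` ways, each of weight at most
`g`; as the product of these bounds is not `M - 1`, exactly one weight misses `g`, by one. -/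
lemma exists_unique_weight_add_one_eq {x : Bool} {r s t g : ℕ} {w : List Bool} (hr : 1 ≤ r)
    (ht : 1 ≤ t) (hl : 3 ≤ r + s + t) (hn : r + (s + 1) + t + 2 ≤ w.length)
    (hg : IsGreatest (chooseProd ![r, t] '' {a | ∑ k, a k = w.count x}) g)
    (hocc : occ (threeWord x r (s + 1) t) w + 1 = maxOcc w.length (threeWord x r (s + 1) t)) :
    maxOcc w.length (threeWord x r (s + 1) t) = (w.count (!x)).choose (s + 1) * g ∧
      ∃ S ∈ (positions (!x) w).powersetCard (s + 1), weight x r t w S + 1 = g ∧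
        ∀ T ∈ (positions (!x) w).powersetCard (s + 1), T ≠ S → weight x r t w T = g := by
  have hgle (i j : ℕ) : i + j ≤ w.count x → i.choose r * j.choose t ≤ g :=
    choose_mul_choose_le_of_isGreatest hg
  obtain ⟨i, j, hij, hprod⟩ := exists_chooseProd_eq x r (s + 1) t w hg
  have hM : maxOcc w.length (threeWord x r (s + 1) t) = (w.count (!x)).choose (s + 1) * g := by
    have hle := chooseProd_le_maxOcc x r (s + 1) t hij
    have hge := occ_threeWord_le (s := s) hgle
    have hne := chooseProd_three_add_one_ne hr s.succ_pos ht (by lia) hn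
      (isGreatest_maxOcc_threeWord x r s t w.length) hij.le
    lia
  refine ⟨hM, exists_unique_deficit (fun T hT ↦ weight_le hgle hT) ?_⟩
  rw [← occ_threeWord, hocc, hM, Finset.card_powersetCard, card_positions]

theorem occ_threeWord_add_one_ne_maxOcc {x : Bool} {r s t : ℕ} {w : List Bool} (hr : 1 ≤ r)
    (ht : 1 ≤ t) (hl : 3 ≤ r + s + t) (hn : r + (s + 1) + t + 2 ≤ w.length)
    (hexc : ¬(s = 0 ∧ r + t = 3 ∧ w.length = 6)) :
    occ (threeWord x r (s + 1) t) w + 1 ≠ maxOcc w.length (threeWord x r (s + 1) t) := by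
  intro hocc
  obtain ⟨g, hg⟩ := exists_isGreatest_chooseProd ![r, t] (w.count x)
  obtain ⟨hM, S, hS, hSg, hothers⟩ := exists_unique_weight_add_one_eq hr ht hl hn hg hocc
  have hgreatest := isGreatest_maxOcc_threeWord x r s t w.length
  rw [hM] at hgreatest
  have hlen := count_add_count_not x w
  have hcard := card_positions (!x) w
  obtain ⟨hSY, hScard⟩ := Finset.mem_powersetCard.mp hS
  rcases (hScard ▸ Finset.card_le_card hSY).eq_or_lt with hsm | hsm
  · rw [hcard] at hsm
    obtain ⟨y, hy⟩ := nonempty_of_mem_powersetCard_succ hS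
    have hle := numBefore_add_numAfter_le (x := x) (w := w) hy hy
    refine chooseProd_three_add_one_ne hr s.succ_pos ht (by lia) hn hgreatest
      (show numBefore x w S + (s + 1) + numAfter x w S ≤ w.length by lia) ?_
    rw [chooseProd_three, ← hsm, Nat.choose_self, one_mul, one_mul]
    exact hSg
  rcases Nat.eq_zero_or_pos s with rfl | hs
  · obtain ⟨y, rfl⟩ := Finset.card_eq_one.mp hScard
    obtain ⟨m, hm⟩ := Nat.exists_eq_add_of_le' (hcard ▸ hsm)
    rw [Nat.choose_one_right, ← hlen, hm] at hgreatest
    have := eq_of_choose_mul_choose_add_one_eq hr ht (by lia) hg hgreatest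
      (numBefore_singleton_add_numAfter_singleton (hSY (Finset.mem_singleton_self y))) hSg
    lia
  · have hgle (i j : ℕ) : i + j ≤ w.count x → i.choose r * j.choose t ≤ g :=
      choose_mul_choose_le_of_isGreatest hg
    obtain ⟨S', hS', hne, hlt⟩ := exists_ne_weight_lt hgle (by lia) hsm hS (by lia)
    exact hlt.ne (hothers S' hS' hne)

/-! ### Words with three runs -/

lemma exists_eq_threeWord_of_numRuns_eq_three {p : List Bool} (h : numRuns p = 3) :
    ∃ x r s t, 1 ≤ r ∧ 1 ≤ t ∧ p = threeWord x r (s + 1) t := by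
  obtain ⟨l₁, l₂, l₃, hruns⟩ := List.length_eq_three.mp h
  have hp : l₁ ++ (l₂ ++ l₃) = p := by
    have := List.flatten_splitBy (· == ·) p
    rwa [show p.splitBy (· == ·) = [l₁, l₂, l₃] from hruns, List.flatten_cons, List.flatten_cons,
      List.flatten_singleton] at this
  have hrep : ∀ l ∈ runs p, ∃ k x, l = List.replicate (k + 1) x := fun l hl ↦ by
    obtain ⟨x, m, rfl⟩ := List.exists_cons_of_ne_nil (List.ne_nil_of_mem_splitBy hl)
    have hchain := List.isChain_of_mem_splitBy hl
    simp only [beq_iff_eq, List.isChain_cons_eq_iff_eq_replicate] at hchain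
    exact ⟨m.length, x, by rw [List.replicate_succ, ← hchain]⟩
  have hne := List.isChain_getLast_head_splitBy (· == ·) p
  rw [show p.splitBy (· == ·) = [l₁, l₂, l₃] from hruns] at hne
  rw [hruns] at hrep
  obtain ⟨r, x, rfl⟩ := hrep l₁ (by simp)
  obtain ⟨s, y, rfl⟩ := hrep l₂ (by simp)
  obtain ⟨t, z, rfl⟩ := hrep l₃ (by simp)
  obtain ⟨hxy, hyz⟩ : x ≠ y ∧ y ≠ z := by simpa using hne
  obtain rfl : y = !x := Bool.eq_not_of_ne hxy.symm
  obtain rfl : x = z := by simpa using Bool.eq_not_of_ne hyz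
  exact ⟨x, r + 1, s, t + 1, Nat.le_add_left .., Nat.le_add_left .., hp.symm⟩

lemma trivEquiv_threeWord_one (x : Bool) {r t : ℕ} (hr : 1 ≤ r) (ht : 1 ≤ t) (hrt : r + t = 3) :
    TrivEquiv (threeWord x r 1 t) [true, true, false, true] := by
  obtain ⟨rfl, rfl⟩ | ⟨rfl, rfl⟩ : r = 2 ∧ t = 1 ∨ r = 1 ∧ t = 2 := by lia
  all_goals cases x <;> simp [TrivEquiv, threeWord, List.replicate_succ]

/-! ### Internal zeros -/

lemma B_eq_zero_iff {n k : ℕ} {p : List Bool} :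
    B n p k = 0 ↔ ∀ w : List Bool, w.length = n → occ p w ≠ k := by
  have : Finite {w : List Bool // w.length = n ∧ occ p w = k} :=
    (List.finite_length_eq Bool n).subset fun w hw ↦ hw.1
  rw [B, Finite.card_eq_zero_iff, isEmpty_subtype]
  simp only [not_and, ne_eq]

lemma B_ne_zero_iff {n k : ℕ} {p : List Bool} :
    B n p k ≠ 0 ↔ ∃ w : List Bool, w.length = n ∧ occ p w = k := by
  simp only [ne_eq, B_eq_zero_iff, not_forall, not_not, exists_prop]

lemma hasInternalZeroAt_of_B_maxOcc_sub_one_eq_zero {n : ℕ} {p : List Bool} {x : Bool}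
    (hx : x ∈ p) (hM : 2 ≤ maxOcc n p) (hB : B n p (maxOcc n p - 1) = 0) :
    HasInternalZeroAt p n := by
  have hzero : occ p (List.replicate n (!x)) = 0 := List.count_eq_zero_of_not_mem fun hp ↦ by
    simpa using List.eq_of_mem_replicate ((List.mem_sublists.mp hp).subset hx)
  exact ⟨0, maxOcc n p - 1, maxOcc n p, by lia, by lia,
    B_ne_zero_iff.mpr ⟨_, List.length_replicate, hzero⟩, hB,
    B_ne_zero_iff.mpr (exists_occ_eq_maxOcc n p)⟩

lemma not_hasInternalZeroAt_of_forall_exists {n M : ℕ} {p : List Bool}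
    (hle : ∀ w : List Bool, w.length = n → occ p w ≤ M)
    (hex : ∀ k ≤ M, ∃ w : List Bool, w.length = n ∧ occ p w = k) : ¬HasInternalZeroAt p n := by
  rintro ⟨-, k₂, k₃, -, h₂₃, -, hk₂, hk₃⟩
  obtain ⟨w, hw, rfl⟩ := B_ne_zero_iff.mp hk₃
  exact B_ne_zero_iff.mpr (hex k₂ (h₂₃.le.trans (hle w hw))) hk₂

lemma not_hasInternalZeroAt_six : ¬HasInternalZeroAt [true, true, false, true] 6 := by
  refine not_hasInternalZeroAt_of_forall_exists (M := 6) (fun w hw ↦ ?_) fun k hk ↦ ?_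
  · have hle : ∀ a b c d e f, occ [true, true, false, true] [a, b, c, d, e, f] ≤ 6 := by decide
    match w, hw with
    | [a, b, c, d, e, f], _ => exact hle a b c d e f
  · have hex : ∀ k < 7, ∃ a b c d e f, occ [true, true, false, true] [a, b, c, d, e, f] = k := by
      decide
    obtain ⟨a, b, c, d, e, f, h⟩ := hex k (Nat.lt_succ_of_le hk)
    exact ⟨_, rfl, h⟩

lemma B_eq_of_occ_eq {p q : List Bool} (e : List Bool ≃ List Bool)
    (hlen : ∀ w, (e w).length = w.length) (hocc : ∀ w, occ q (e w) = occ p w) (n k : ℕ) :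
    B n q k = B n p k :=
  (Nat.card_congr (e.subtypeEquiv fun w ↦ by rw [hlen, hocc])).symm

lemma B_reverse (n : ℕ) (p : List Bool) (k : ℕ) : B n p.reverse k = B n p k :=
  B_eq_of_occ_eq List.reverse_involutive.toPerm (fun _ ↦ List.length_reverse) (occ_reverse p) n k

lemma B_map_not (n : ℕ) (p : List Bool) (k : ℕ) : B n (p.map (!·)) k = B n p k :=
  B_eq_of_occ_eq (Equiv.listEquivOfEquiv Equiv.boolNot) (fun _ ↦ List.length_map _)
    (occ_map_not p) n k

lemma TrivEquiv.B_eq {p q : List Bool} (h : TrivEquiv p q) (n k : ℕ) : B n q k = B n p k := by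
  obtain rfl | rfl | rfl | rfl := h <;> simp only [B_reverse, B_map_not]

lemma TrivEquiv.hasInternalZeroAt_iff {p q : List Bool} (h : TrivEquiv p q) (n : ℕ) :
    HasInternalZeroAt q n ↔ HasInternalZeroAt p n := by
  simp only [HasInternalZeroAt, h.B_eq]

lemma TrivEquiv.length_eq {p q : List Bool} (h : TrivEquiv p q) : q.length = p.length := by
  obtain rfl | rfl | rfl | rfl := h <;> simp only [List.length_reverse, List.length_map]

lemma two_le_maxOcc_threeWord (x : Bool) {r s t n : ℕ} (hl : 3 ≤ r + s + t)
    (hn : r + (s + 1) + t < n) : 2 ≤ maxOcc n (threeWord x r (s + 1) t) :=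
  two_le_of_isGreatest_chooseProd (exists_two_le_triple (by lia))
    (by simpa [Fin.sum_univ_three] using hn) (isGreatest_maxOcc_threeWord x r s t n)

lemma B_threeWord_maxOcc_sub_one_eq_zero {x : Bool} {r s t n : ℕ} (hr : 1 ≤ r) (ht : 1 ≤ t)
    (hl : 3 ≤ r + s + t) (hn : r + (s + 1) + t + 2 ≤ n)
    (hexc : ¬(s = 0 ∧ r + t = 3 ∧ n = 6)) :
    B n (threeWord x r (s + 1) t) (maxOcc n (threeWord x r (s + 1) t) - 1) = 0 := by
  refine B_eq_zero_iff.mpr fun w hw hocc ↦ ?_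
  subst hw
  have hM := two_le_maxOcc_threeWord x (n := w.length) hl (by lia)
  exact occ_threeWord_add_one_ne_maxOcc hr ht hl hn hexc (by rw [hocc]; lia)

theorem three_runs_internalZeros (p : List Bool) (l : ℕ) (hl : p.length = l)
    (hr : numRuns p = 3) (hl4 : 4 ≤ l) :
    (¬ TrivEquiv p [true, true, false, true] →
      ∀ n, l + 2 ≤ n → B n p (maxOcc n p - 1) = 0 ∧ HasInternalZeroAt p n) ∧
    (TrivEquiv p [true, true, false, true] →
      ¬ HasInternalZeroAt p 6 ∧ ∀ n, 7 ≤ n → B n p (maxOcc n p - 1) = 0) := by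
  obtain ⟨x, r, s, t, hr1, ht1, rfl⟩ := exists_eq_threeWord_of_numRuns_eq_three hr
  have hlen := (length_threeWord x r (s + 1) t).symm.trans hl
  refine ⟨fun hne n hn ↦ ?_, fun heq ↦ ⟨?_, fun n hn ↦ ?_⟩⟩
  · have hB : B n (threeWord x r (s + 1) t) (maxOcc n (threeWord x r (s + 1) t) - 1) = 0 := by
      refine B_threeWord_maxOcc_sub_one_eq_zero hr1 ht1 (by lia) (by lia) ?_
      rintro ⟨rfl, hrt, -⟩
      exact hne (trivEquiv_threeWord_one x hr1 ht1 hrt)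
    have hM := two_le_maxOcc_threeWord x (n := n) (show 3 ≤ r + s + t by lia) (by lia)
    have hx : x ∈ threeWord x r (s + 1) t := by simp [threeWord, Nat.ne_of_gt hr1]
    exact ⟨hB, hasInternalZeroAt_of_B_maxOcc_sub_one_eq_zero hx hM hB⟩
  · exact fun h ↦ not_hasInternalZeroAt_six ((heq.hasInternalZeroAt_iff 6).mpr h)
  · have hl' : 4 = l := heq.length_eq.trans hl
    exact B_threeWord_maxOcc_sub_one_eq_zero hr1 ht1 (by lia) (by lia) (by lia)
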